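/- arXiv:2503.01663 — 2 statements merged into one kernel-verified Lean document; each statement's English description precedes it below -/
import Mathlib

section
/- In the two-party, two-election model with presidential win-probability function f and parliamentary win-probability function g, the probability that SOME party (a or b) sweeps both elections is at least as large when the elections are held simultaneously as when they are held separately: Σ_{S ⊆ H} μ_p(S)·[f(S)g(S) + (1−f(S))(1−g(S))] ≥ (Σ_S μ_p(S) f(S))·(Σ_S μ_p(S) g(S)) + (1 − Σ_S μ_p(S) f(S))·(1 − Σ_S μ_p(S) g(S)). -/
open Finset

/-- Product Bernoulli measure on subsets of `H = Fin m`. -/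
def bern {m : ℕ} (p : Fin m → ℝ) (S : Finset (Fin m)) : ℝ :=
  (∏ h ∈ S, p h) * ∏ h ∈ Sᶜ, (1 - p h)

/-- Presidential win-probability for party `a` (with supporter set `A`) given
turnout `S`: win on a strict majority of cast votes, ties broken by a fair coin. -/
noncomputable def presWin {m : ℕ} (A : Finset (Fin m)) (S : Finset (Fin m)) : ℝ :=
  if (S \ A).card < (S ∩ A).card then 1
  else if (S ∩ A).card = (S \ A).card then 1 / 2 else 0

/-- Probability that party `a` is awarded district `D` given turnout `S`. -/
noncomputable def distWin {m : ℕ} (A D S : Finset (Fin m)) : ℝ :=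
  if ((S ∩ D) \ A).card < (S ∩ A ∩ D).card then 1
  else if (S ∩ A ∩ D).card = ((S ∩ D) \ A).card then 1 / 2 else 0

/-- Probability of winning parliament given `w` districts out of `k`:  a strict
majority of the districts wins, an exact tie is broken by a fair coin. -/
noncomputable def majOf (k w : ℕ) : ℝ :=
  if k < 2 * w then 1 else if 2 * w = k then 1 / 2 else 0

/-- Parliamentary win-probability for party `a` (supporter set `A`, districts `D`)
given turnout `S`: each district is awarded independently with probability
`distWin A (D j) S`, and party `a` wins parliament on a majority of districts. -/
noncomputable def parlWin {m k : ℕ} (A : Finset (Fin m)) (D : Fin k → Finset (Fin m))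
    (S : Finset (Fin m)) : ℝ :=
  ∑ W : Finset (Fin k),
    (∏ j ∈ W, distWin A (D j) S) * (∏ j ∈ Wᶜ, (1 - distWin A (D j) S)) * majOf k W.card

/-! Flipping the turnout of the voters of party `b` turns both win-probability functions into
increasing functions and keeps the turnout distribution a product measure, so Harris' inequality
makes the two wins of party `a` positively correlated; the probability of a sweep by some party is
an increasing affine function of `E(fg)` once `E(f)` and `E(g)` are fixed. That parliament is
increasing in the awards of the individual districts is stochastic domination between product
measures, which like Harris' inequality is an instance of the four functions theorem. -/

open scoped symmDiff

section ProductBernoulli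

variable {m : ℕ} {p u v : Fin m → ℝ}

theorem bern_eq_prod_piecewise (p : Fin m → ℝ) (S : Finset (Fin m)) :
    bern p S = ∏ h, S.piecewise p (1 - p) h := by
  simp only [bern, prod_piecewise, univ_inter, compl_eq_univ_sdiff, Pi.sub_apply, Pi.one_apply]

theorem bern_nonneg (hp₀ : 0 ≤ p) (hp₁ : p ≤ 1) : 0 ≤ bern p := fun _ =>
  mul_nonneg (prod_nonneg fun h _ => hp₀ h) (prod_nonneg fun h _ => sub_nonneg.2 (hp₁ h))

theorem sum_bern (p : Fin m → ℝ) : ∑ S, bern p S = 1 := by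
  calc ∑ S, bern p S = ∏ h, (p h + (1 - p h)) := (Fintype.prod_add p fun h => 1 - p h).symm
    _ = 1 := by simp only [add_sub_cancel, prod_const_one]

theorem sum_bern_mul_sub_const (p : Fin m → ℝ) (f : Finset (Fin m) → ℝ) (c : ℝ) :
    ∑ S, bern p S * (f S - c) = ∑ S, bern p S * f S - c := by
  simp only [mul_sub, sum_sub_distrib, ← sum_mul, sum_bern, one_mul]

/-- The four functions condition: for `u = v` it is the lattice condition of the FKG inequality,
for `u ≤ v` that of Holley's inequality. -/
theorem bern_mul_bern_le (hu : 0 ≤ u) (huv : u ≤ v) (hv : v ≤ 1) (S T : Finset (Fin m)) :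
    bern u S * bern v T ≤ bern u (S ∩ T) * bern v (S ∪ T) := by
  simp only [bern_eq_prod_piecewise, ← prod_mul_distrib]
  refine prod_le_prod (fun h _ => mul_nonneg ?_ ?_) fun h _ => ?_
  · exact le_piecewise_of_le_of_le S hu (sub_nonneg.2 (huv.trans hv)) h
  · exact le_piecewise_of_le_of_le T (hu.trans huv) (sub_nonneg.2 hv) h
  · have only_S_votes : u h * (1 - v h) ≤ (1 - u h) * v h := by linarith [huv h]
    by_cases hS : h ∈ S <;> by_cases hT : h ∈ T <;> simp [hS, hT, only_S_votes]

theorem sum_bern_mul_le_sum_bern_mul (hu : 0 ≤ u) (huv : u ≤ v) (hv : v ≤ 1)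
    {f : Finset (Fin m) → ℝ} (hf : Monotone f) :
    ∑ S, bern u S * f S ≤ ∑ S, bern v S * f S := by
  have centered :=
    holley (bern u) (bern v) (fun S => f S - f ∅) (fun S => sub_nonneg.2 (hf (empty_subset S)))
      (bern_nonneg hu (huv.trans hv)) (bern_nonneg (hu.trans huv) hv)
      (fun S T hST => sub_le_sub_right (hf hST) _) ((sum_bern u).trans (sum_bern v).symm)
      (bern_mul_bern_le hu huv hv)
  simpa only [mul_comm (f _ - f ∅), sum_bern_mul_sub_const, sub_le_sub_iff_right] using centered

theorem harris_bern (hp₀ : 0 ≤ p) (hp₁ : p ≤ 1) {f g : Finset (Fin m) → ℝ}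
    (hf : Monotone f) (hg : Monotone g) :
    (∑ S, bern p S * f S) * (∑ S, bern p S * g S) ≤ ∑ S, bern p S * (f S * g S) := by
  have centered : (∑ S, bern p S * (f S - f ∅)) * (∑ S, bern p S * (g S - g ∅)) ≤
      (∑ S, bern p S) * ∑ S, bern p S * ((f S - f ∅) * (g S - g ∅)) :=
    fkg (fun S => f S - f ∅) (fun S => g S - g ∅) (bern p) (bern_nonneg hp₀ hp₁)
      (fun S => sub_nonneg.2 (hf (empty_subset S))) (fun S => sub_nonneg.2 (hg (empty_subset S)))
      (fun S T hST => sub_le_sub_right (hf hST) _) (fun S T hST => sub_le_sub_right (hg hST) _)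
      (bern_mul_bern_le hp₀ le_rfl hp₁)
  have expand : ∑ S, bern p S * ((f S - f ∅) * (g S - g ∅)) =
      ∑ S, bern p S * (f S * g S) - g ∅ * ∑ S, bern p S * f S - f ∅ * ∑ S, bern p S * g S +
        f ∅ * g ∅ * ∑ S, bern p S := by
    simp only [mul_sum, ← sum_sub_distrib, ← sum_add_distrib]
    exact sum_congr rfl fun S _ => by ring
  rw [expand, sum_bern_mul_sub_const, sum_bern_mul_sub_const, sum_bern] at centered
  linarith

theorem bern_symmDiff (p : Fin m → ℝ) (B S : Finset (Fin m)) :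
    bern p (S ∆ B) = bern (B.piecewise (1 - p) p) S := by
  simp only [bern_eq_prod_piecewise]
  refine prod_congr rfl fun h _ => ?_
  by_cases hS : h ∈ S <;> by_cases hB : h ∈ B <;> simp [mem_symmDiff, hS, hB]

theorem sum_bern_piecewise_mul_symmDiff (p : Fin m → ℝ) (B : Finset (Fin m))
    (f : Finset (Fin m) → ℝ) :
    ∑ S, bern (B.piecewise (1 - p) p) S * f (S ∆ B) = ∑ S, bern p S * f S := by
  have flip : Function.Involutive (· ∆ B) := fun S => symmDiff_symmDiff_cancel_right B S
  simpa only [bern_symmDiff] using flip.bijective.sum_comp fun S => bern p S * f S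

theorem harris_bern_of_monotone_symmDiff (hp₀ : 0 ≤ p) (hp₁ : p ≤ 1) {B : Finset (Fin m)}
    {f g : Finset (Fin m) → ℝ} (hf : Monotone fun S => f (S ∆ B))
    (hg : Monotone fun S => g (S ∆ B)) :
    (∑ S, bern p S * f S) * (∑ S, bern p S * g S) ≤ ∑ S, bern p S * (f S * g S) := by
  have harris := harris_bern (le_piecewise_of_le_of_le B (sub_nonneg.2 hp₁) hp₀)
    (piecewise_le_of_le_of_le B (sub_le_self 1 hp₀) hp₁) hf hg
  simpa only [sum_bern_piecewise_mul_symmDiff p B f, sum_bern_piecewise_mul_symmDiff p B g,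
    sum_bern_piecewise_mul_symmDiff p B fun S => f S * g S] using harris

theorem sum_bern_mul_agreement (p : Fin m → ℝ) (f g : Finset (Fin m) → ℝ) :
    ∑ S, bern p S * (f S * g S + (1 - f S) * (1 - g S)) =
      2 * ∑ S, bern p S * (f S * g S) - ∑ S, bern p S * f S - ∑ S, bern p S * g S + 1 := by
  calc ∑ S, bern p S * (f S * g S + (1 - f S) * (1 - g S))
    _ = 2 * ∑ S, bern p S * (f S * g S) - ∑ S, bern p S * f S - ∑ S, bern p S * g S +
          ∑ S, bern p S := by
      simp only [mul_sum, ← sum_sub_distrib, ← sum_add_distrib]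
      exact sum_congr rfl fun S _ => by ring
    _ = _ := by rw [sum_bern]

end ProductBernoulli

theorem symmDiff_compl_inter_self {α : Type*} [Fintype α] [DecidableEq α] (A S : Finset α) :
    S ∆ Aᶜ ∩ A = S ∩ A := by
  ext h; simp only [mem_inter, mem_symmDiff, mem_compl]; tauto

theorem symmDiff_compl_sdiff_self {α : Type*} [Fintype α] [DecidableEq α] (A S : Finset α) :
    S ∆ Aᶜ \ A = Aᶜ \ S := by
  ext h; simp only [mem_sdiff, mem_symmDiff, mem_compl]; tauto

/-- The probability that a side with `x` votes beats one with `y` votes, ties being decided by a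
fair coin: the common rule behind `presWin`, `distWin` and `majOf`. -/
noncomputable def majorityWin (x y : ℕ) : ℝ :=
  if y < x then 1 else if x = y then 1 / 2 else 0

theorem majorityWin_nonneg (x y : ℕ) : 0 ≤ majorityWin x y := by
  unfold majorityWin; split_ifs <;> norm_num

theorem majorityWin_le_one (x y : ℕ) : majorityWin x y ≤ 1 := by
  unfold majorityWin; split_ifs <;> norm_num

theorem majorityWin_le_majorityWin {x x' y y' : ℕ} (hx : x ≤ x') (hy : y' ≤ y) :
    majorityWin x y ≤ majorityWin x' y' := by
  unfold majorityWin; split_ifs <;> first | omega | norm_num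

section Elections

variable {m k : ℕ}

theorem presWin_eq_majorityWin (A S : Finset (Fin m)) :
    presWin A S = majorityWin (S ∩ A).card (S \ A).card := rfl

theorem distWin_eq_majorityWin (A D S : Finset (Fin m)) :
    distWin A D S = majorityWin (S ∩ A ∩ D).card ((S ∩ D) \ A).card := rfl

theorem majOf_eq_majorityWin (k w : ℕ) : majOf k w = majorityWin (2 * w) k := rfl

theorem parlWin_eq_sum_bern (A : Finset (Fin m)) (D : Fin k → Finset (Fin m))
    (S : Finset (Fin m)) :
    parlWin A D S = ∑ W, bern (fun j => distWin A (D j) S) W * majOf k W.card := rfl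

theorem distWin_nonneg (A D S : Finset (Fin m)) : 0 ≤ distWin A D S := by
  rw [distWin_eq_majorityWin]; exact majorityWin_nonneg _ _

theorem distWin_le_one (A D S : Finset (Fin m)) : distWin A D S ≤ 1 := by
  rw [distWin_eq_majorityWin]; exact majorityWin_le_one _ _

theorem majOf_mono (k : ℕ) : Monotone (majOf k) := fun w w' hw => by
  simp only [majOf_eq_majorityWin]
  exact majorityWin_le_majorityWin (Nat.mul_le_mul_left 2 hw) le_rfl

theorem presWin_symmDiff_compl (A S : Finset (Fin m)) :
    presWin A (S ∆ Aᶜ) = majorityWin (S ∩ A).card (Aᶜ \ S).card := by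
  rw [presWin_eq_majorityWin, symmDiff_compl_inter_self, symmDiff_compl_sdiff_self]

theorem distWin_symmDiff_compl (A D S : Finset (Fin m)) :
    distWin A D (S ∆ Aᶜ) = majorityWin (S ∩ A ∩ D).card ((Aᶜ \ S) ∩ D).card := by
  rw [distWin_eq_majorityWin, symmDiff_compl_inter_self, ← sdiff_inter_right_comm,
    symmDiff_compl_sdiff_self]

theorem monotone_presWin_symmDiff_compl (A : Finset (Fin m)) :
    Monotone fun S => presWin A (S ∆ Aᶜ) := fun S T hST => by
  simp only [presWin_symmDiff_compl]
  apply majorityWin_le_majorityWin <;> gcongr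

theorem monotone_distWin_symmDiff_compl (A D : Finset (Fin m)) :
    Monotone fun S => distWin A D (S ∆ Aᶜ) := fun S T hST => by
  simp only [distWin_symmDiff_compl]
  apply majorityWin_le_majorityWin <;> gcongr

theorem monotone_parlWin_symmDiff_compl (A : Finset (Fin m)) (D : Fin k → Finset (Fin m)) :
    Monotone fun S => parlWin A D (S ∆ Aᶜ) := fun S T hST => by
  simp only [parlWin_eq_sum_bern]
  exact sum_bern_mul_le_sum_bern_mul (fun j => distWin_nonneg A (D j) _)
    (fun j => monotone_distWin_symmDiff_compl A (D j) hST) (fun j => distWin_le_one A (D j) _)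
    ((majOf_mono k).comp card_mono)

end Elections

theorem simultaneous_some_party_sweep_ge_general {m k : ℕ} (A : Finset (Fin m))
    (D : Fin k → Finset (Fin m)) (p : Fin m → ℝ) (hp : ∀ h, 0 ≤ p h ∧ p h ≤ 1) :
    (∑ S : Finset (Fin m), bern p S * presWin A S) *
        (∑ S : Finset (Fin m), bern p S * parlWin A D S) +
      (1 - ∑ S : Finset (Fin m), bern p S * presWin A S) *
        (1 - ∑ S : Finset (Fin m), bern p S * parlWin A D S) ≤
    ∑ S : Finset (Fin m), bern p S *
      (presWin A S * parlWin A D S + (1 - presWin A S) * (1 - parlWin A D S)) := by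
  have harris := harris_bern_of_monotone_symmDiff (fun h => (hp h).1) (fun h => (hp h).2)
    (monotone_presWin_symmDiff_compl A) (monotone_parlWin_symmDiff_compl A D)
  rw [sum_bern_mul_agreement]
  linarith

/-- In the two-party, two-election model, the probability that SOME party sweeps both
elections is at least as large when the elections are held simultaneously as when they
are held on separate dates. -/
theorem simultaneous_some_party_sweep_ge {m k : ℕ} (A : Finset (Fin m))
    (D : Fin k → Finset (Fin m)) (hD : ∀ h : Fin m, ∃! j, h ∈ D j)
    (p : Fin m → ℝ) (hp : ∀ h, 0 ≤ p h ∧ p h ≤ 1) :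
    (∑ S : Finset (Fin m), bern p S * presWin A S) *
        (∑ S : Finset (Fin m), bern p S * parlWin A D S) +
      (1 - ∑ S : Finset (Fin m), bern p S * presWin A S) *
        (1 - ∑ S : Finset (Fin m), bern p S * parlWin A D S) ≤
    ∑ S : Finset (Fin m), bern p S *
      (presWin A S * parlWin A D S + (1 - presWin A S) * (1 - parlWin A D S)) :=
  simultaneous_some_party_sweep_ge_general A D p hp
end

section
/- Let H = {1,…,m} and L = {1,…,n} be finite sets, let p = (p₁,…,p_m) ∈ [0,1]^m, and let F = (f₁,…,f_n) be an aligned tuple of nonnegative real-valued functions on the power set of H. Let Π^simul = (π₁,…,π_m) be the fully simultaneous schedule in which π_h is the trivial partition {L} for every h. Then for every tuple Π of partitions of L, E(Π^simul, p, F) ≥ E(Π, p, F); that is, the fully simultaneous polling schedule maximizes E over all staggered schedules. -/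
open Finset

/-- Weight of a block `M` of a partition relative to a turnout set `S`. -/
def blockWeight {n : ℕ} (p : ℝ) (M S : Finset (Fin n)) : ℝ :=
  if M ⊆ S then p else if M ∩ S = ∅ then 1 - p else 0

/-- The measure `μ_{π,p}` on subsets of `L = Fin n`. -/
def partMeasure {n : ℕ} (pt : Finpartition (univ : Finset (Fin n))) (p : ℝ)
    (S : Finset (Fin n)) : ℝ :=
  ∏ M ∈ pt.parts, blockWeight p M S

/-- `L_h(T) = {l : (h,l) ∈ T}`. -/
def Lh {m n : ℕ} (h : Fin m) (T : Finset (Fin m × Fin n)) : Finset (Fin n) :=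
  univ.filter fun l => (h, l) ∈ T

/-- `H_l(T) = {h : (h,l) ∈ T}`. -/
def Hl {m n : ℕ} (l : Fin n) (T : Finset (Fin m × Fin n)) : Finset (Fin m) :=
  univ.filter fun h => (h, l) ∈ T

/-- The measure `μ_{Π,p}` on subsets of `H × L`. -/
def schedMeasure {m n : ℕ} (Sch : Fin m → Finpartition (univ : Finset (Fin n)))
    (p : Fin m → ℝ) (T : Finset (Fin m × Fin n)) : ℝ :=
  ∏ h, partMeasure (Sch h) (p h) (Lh h T)

/-- `E(Π, p, F)`. -/
def schedExp {m n : ℕ} (Sch : Fin m → Finpartition (univ : Finset (Fin n)))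
    (p : Fin m → ℝ) (F : Fin n → Finset (Fin m) → ℝ) : ℝ :=
  ∑ T : Finset (Fin m × Fin n), (∏ l, F l (Hl l T)) * schedMeasure Sch p T

def IncreasingAt {m : ℕ} (f : Finset (Fin m) → ℝ) (h : Fin m) : Prop :=
  ∀ S : Finset (Fin m), f S ≤ f (insert h S)

def DecreasingAt {m : ℕ} (f : Finset (Fin m) → ℝ) (h : Fin m) : Prop :=
  ∀ S : Finset (Fin m), f (insert h S) ≤ f S

def Aligned {m n : ℕ} (F : Fin n → Finset (Fin m) → ℝ) : Prop :=
  ∀ h : Fin m, (∀ l, IncreasingAt (F l) h) ∨ (∀ l, DecreasingAt (F l) h)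

/-- `Sch'` is coarser than `Sch`. -/
def Coarser {m n : ℕ} (Sch' Sch : Fin m → Finpartition (univ : Finset (Fin n))) : Prop :=
  ∀ h, ∀ M ∈ (Sch h).parts, ∃ M' ∈ (Sch' h).parts, M ⊆ M'

/-- Expectation with respect to the product Bernoulli measure. -/
def bernExp {m : ℕ} (p : Fin m → ℝ) (f : Finset (Fin m) → ℝ) : ℝ :=
  ∑ S : Finset (Fin m), f S * bern p S

/-!
A schedule makes the voters' turnout sets independent, so their laws may be replaced one voter at a
time, the others being frozen. For that voter, alignment says that every `f_l` moves in the same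
direction when the voter joins, from `v_l` to `u_l` say, and the expectation of the product over a
partition `π` is `∏ M ∈ π, (p ∏ l ∈ M, u_l + (1 - p) ∏ l ∈ M, v_l)`. The factor of a block is
supermultiplicative over disjoint unions, which is Chebyshev's inequality for a two-point measure.
Hence merging blocks can only increase the product.
-/

section ProductMeasure

variable {ι R : Type*} {α : ι → Type*} [Fintype ι] [DecidableEq ι] [∀ i, Fintype (α i)]
  [CommSemiring R]

theorem sum_mul_prod_eq_sum_piSplitAt (i : ι) (μ : ∀ j, α j → R) (G : (∀ j, α j) → R) :
    ∑ s, G s * ∏ j, μ j (s j) =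
      ∑ t : ∀ j : {j // j ≠ i}, α j, (∏ j : {j // j ≠ i}, μ j (t j)) *
        ∑ x, G ((Equiv.piSplitAt i α).symm (x, t)) * μ i x := by
  rw [← (Equiv.piSplitAt i α).symm.sum_comp, Fintype.sum_prod_type_right]
  refine sum_congr rfl fun t _ => ?_
  rw [mul_sum]
  refine sum_congr rfl fun x _ => ?_
  have hprod : ∏ j, μ j ((Equiv.piSplitAt i α).symm (x, t) j) =
      μ i x * ∏ j : {j // j ≠ i}, μ j (t j) := by
    rw [Fintype.prod_eq_mul_prod_subtype_ne _ i]
    congr 1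
    · simp
    · exact prod_congr rfl fun j _ => by simp [j.2]
  rw [hprod]
  ring

variable [PartialOrder R] [IsOrderedRing R]

theorem sum_mul_prod_update_le {μ : ∀ j, α j → R} (hμ : ∀ j x, 0 ≤ μ j x) (i : ι) (ν : α i → R)
    {G : (∀ j, α j) → R}
    (hG : ∀ s, ∑ x, G (Function.update s i x) * μ i x ≤ ∑ x, G (Function.update s i x) * ν x) :
    ∑ s, G s * ∏ j, μ j (s j) ≤ ∑ s, G s * ∏ j, Function.update μ i ν j (s j) := by
  rw [sum_mul_prod_eq_sum_piSplitAt i, sum_mul_prod_eq_sum_piSplitAt i]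
  refine sum_le_sum fun t _ => ?_
  have hrest : ∏ j : {j // j ≠ i}, Function.update μ i ν j (t j) =
      ∏ j : {j // j ≠ i}, μ j (t j) :=
    prod_congr rfl fun j _ => by rw [Function.update_of_ne j.2]
  rw [hrest, Function.update_self]
  refine mul_le_mul_of_nonneg_left ?_ (prod_nonneg fun j _ => hμ j (t j))
  rcases isEmpty_or_nonempty (α i) with _ | ⟨⟨x₀⟩⟩
  · simp
  · have hupdate (x : α i) : (Equiv.piSplitAt i α).symm (x, t) =
        Function.update ((Equiv.piSplitAt i α).symm (x₀, t)) i x := by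
      ext j
      by_cases hj : j = i
      · subst hj
        simp
      · simp [hj]
    simpa only [← hupdate] using hG ((Equiv.piSplitAt i α).symm (x₀, t))

theorem sum_mul_prod_le_sum_mul_prod {μ ν : ∀ i, α i → R} (hμ : ∀ i x, 0 ≤ μ i x)
    (hν : ∀ i x, 0 ≤ ν i x) {G : (∀ i, α i) → R}
    (hG : ∀ i s, ∑ x, G (Function.update s i x) * μ i x ≤
      ∑ x, G (Function.update s i x) * ν i x) :
    ∑ s, G s * ∏ i, μ i (s i) ≤ ∑ s, G s * ∏ i, ν i (s i) := by
  suffices hybrid : ∀ A : Finset ι,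
      ∑ s, G s * ∏ i, μ i (s i) ≤ ∑ s, G s * ∏ i, A.piecewise ν μ i (s i) by
    simpa only [piecewise_univ] using hybrid univ
  intro A
  induction A using Finset.induction_on with
  | empty => simp only [piecewise_empty, le_refl]
  | insert i A hi ih =>
    rw [piecewise_insert]
    refine ih.trans (sum_mul_prod_update_le (fun j x => ?_) i (ν i) fun s => ?_)
    · exact piecewise_cases A ν μ (fun f => ∀ y, 0 ≤ f y) (hν j) (hμ j) x
    · simpa only [piecewise_eq_of_notMem _ _ _ hi] using hG i s

end ProductMeasure

section Blocks

variable {α : Type*} [DecidableEq α] {s S M : Finset α} {P Q : Finpartition s}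
  {B : Finset (Finset α)}

theorem mem_biUnion_blocks_iff (hB : B ⊆ P.parts) (hM : M ∈ P.parts) {a : α} (ha : a ∈ M) :
    a ∈ B.biUnion id ↔ M ∈ B := by
  refine ⟨fun h => ?_, fun h => mem_biUnion.2 ⟨M, h, ha⟩⟩
  obtain ⟨N, hN, haN⟩ := mem_biUnion.1 h
  rwa [P.eq_of_mem_parts hM (hB hN) ha haN]

theorem subset_biUnion_blocks_iff (hB : B ⊆ P.parts) (hM : M ∈ P.parts) :
    M ⊆ B.biUnion id ↔ M ∈ B := by
  obtain ⟨a, ha⟩ := P.nonempty_of_mem_parts hM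
  exact ⟨fun h => (mem_biUnion_blocks_iff hB hM ha).1 (h ha),
    fun h => subset_biUnion_of_mem id h⟩

theorem disjoint_biUnion_blocks (hB : B ⊆ P.parts) (hM : M ∈ P.parts) (hMB : M ∉ B) :
    Disjoint M (B.biUnion id) :=
  disjoint_left.2 fun _ ha h => hMB ((mem_biUnion_blocks_iff hB hM ha).1 h)

theorem filter_subset_biUnion_blocks (hB : B ⊆ P.parts) :
    {M ∈ P.parts | M ⊆ B.biUnion id} = B := by
  ext M
  rw [mem_filter]
  exact ⟨fun h => (subset_biUnion_blocks_iff hB h.1).1 h.2,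
    fun h => ⟨hB h, (subset_biUnion_blocks_iff hB (hB h)).2 h⟩⟩

theorem biUnion_filter_subset_of_forall_subset_or_disjoint (hS : S ⊆ s)
    (h : ∀ M ∈ P.parts, M ⊆ S ∨ Disjoint M S) :
    {M ∈ P.parts | M ⊆ S}.biUnion id = S := by
  refine Subset.antisymm (biUnion_subset.2 fun M hM => (mem_filter.1 hM).2) fun a ha => ?_
  obtain ⟨M, hM, haM⟩ := P.exists_mem (hS ha)
  have hMS : M ⊆ S := (h M hM).resolve_right fun hdisj => disjoint_left.1 hdisj haM ha
  exact mem_biUnion.2 ⟨M, mem_filter.2 ⟨hM, hMS⟩, haM⟩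

theorem biUnion_sdiff_blocks (hB : B ⊆ P.parts) :
    (P.parts \ B).biUnion id = s \ B.biUnion id := by
  ext a
  by_cases ha : a ∈ s
  · obtain ⟨M, hM, haM⟩ := P.exists_mem ha
    rw [mem_sdiff, mem_biUnion_blocks_iff sdiff_subset hM haM, mem_biUnion_blocks_iff hB hM haM,
      mem_sdiff]
    exact and_congr_left' (iff_of_true hM ha)
  · have hsub : (P.parts \ B).biUnion id ⊆ s :=
      biUnion_subset.2 fun M hM => P.subset (mem_sdiff.1 hM).1
    exact iff_of_false (fun h => ha (hsub h)) fun h => ha (mem_sdiff.1 h).1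

theorem prod_biUnion_blocks {R : Type*} [CommMonoid R] (hB : B ⊆ P.parts) (w : α → R) :
    ∏ a ∈ B.biUnion id, w a = ∏ M ∈ B, ∏ a ∈ M, w a :=
  prod_biUnion (P.disjoint.subset (coe_subset.2 hB))

theorem subset_or_disjoint_of_le (hPQ : P ≤ Q) {N : Finset α} (hN : N ∈ Q.parts)
    (hM : M ∈ P.parts) : M ⊆ N ∨ Disjoint M N := by
  obtain ⟨N', hN', hMN'⟩ := hPQ hM
  rcases eq_or_ne N' N with rfl | hne
  · exact .inl hMN'
  · exact .inr ((Q.disjoint hN' hN hne).mono_left hMN')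

theorem prod_parts_eq_prod_prod_filter_subset {R : Type*} [CommMonoid R] (hPQ : P ≤ Q)
    (c : Finset α → R) :
    ∏ M ∈ P.parts, c M = ∏ N ∈ Q.parts, ∏ M ∈ P.parts with M ⊆ N, c M := by
  have hparts : P.parts = Q.parts.biUnion fun N => {M ∈ P.parts | M ⊆ N} := by
    ext M
    simp only [mem_biUnion, mem_filter]
    refine ⟨fun hM => ?_, fun ⟨_, _, hM, _⟩ => hM⟩
    obtain ⟨N, hN, hMN⟩ := hPQ hM
    exact ⟨N, hN, hM, hMN⟩
  conv_lhs => rw [hparts]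
  refine prod_biUnion fun N hN N' hN' hne => disjoint_left.2 fun M hM hM' => ?_
  obtain ⟨hMP, hMN⟩ := mem_filter.1 hM
  obtain ⟨a, ha⟩ := P.nonempty_of_mem_parts hMP
  exact hne (Q.eq_of_mem_parts hN hN' (hMN ha) ((mem_filter.1 hM').2 ha))

end Blocks

section Supermultiplicative

variable {α R : Type*} [DecidableEq α]

section SetFunction

variable [CommSemiring R] [PartialOrder R] [IsOrderedRing R] {c : Finset α → R}

theorem prod_le_apply_biUnion_of_supermultiplicative (hc : ∀ A, 0 ≤ c A) (hempty : 1 ≤ c ∅)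
    (hunion : ∀ A B, Disjoint A B → c A * c B ≤ c (A ∪ B)) {K : Finset (Finset α)}
    (hK : (K : Set (Finset α)).PairwiseDisjoint id) :
    ∏ M ∈ K, c M ≤ c (K.biUnion id) := by
  induction K using Finset.induction_on with
  | empty => simpa using hempty
  | insert M K hM ih =>
    rw [coe_insert, Set.pairwiseDisjoint_insert_of_notMem (mem_coe.not.2 hM)] at hK
    rw [prod_insert hM, biUnion_insert]
    exact (mul_le_mul_of_nonneg_left (ih hK.1) (hc M)).trans
      (hunion _ _ ((disjoint_biUnion_right _ _ _).2 hK.2))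

theorem prod_parts_le_prod_parts_of_supermultiplicative (hc : ∀ A, 0 ≤ c A) (hempty : 1 ≤ c ∅)
    (hunion : ∀ A B, Disjoint A B → c A * c B ≤ c (A ∪ B)) {s : Finset α}
    {P Q : Finpartition s} (hPQ : P ≤ Q) :
    ∏ M ∈ P.parts, c M ≤ ∏ N ∈ Q.parts, c N := by
  rw [prod_parts_eq_prod_prod_filter_subset hPQ]
  refine prod_le_prod (fun N _ => prod_nonneg fun M _ => hc M) fun N hN => ?_
  have hN_union : {M ∈ P.parts | M ⊆ N}.biUnion id = N :=
    biUnion_filter_subset_of_forall_subset_or_disjoint (Q.subset hN) fun _ =>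
      subset_or_disjoint_of_le hPQ hN
  have hdisj : (({M ∈ P.parts | M ⊆ N} : Finset (Finset α)) : Set _).PairwiseDisjoint id :=
    P.disjoint.subset (coe_subset.2 (filter_subset _ _))
  simpa only [hN_union] using
    prod_le_apply_biUnion_of_supermultiplicative hc hempty hunion hdisj

end SetFunction

variable [CommRing R] [PartialOrder R] [IsOrderedRing R]

theorem convexComb_mul_convexComb_le {p q a b a' b' : R} (hp : 0 ≤ p) (hq : 0 ≤ q)
    (hpq : p + q = 1) (h : 0 ≤ (a - b) * (a' - b')) :
    (p * a + q * b) * (p * a' + q * b') ≤ p * (a * a') + q * (b * b') := by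
  obtain rfl : q = 1 - p := eq_sub_of_add_eq' hpq
  have hgap : p * (a * a') + (1 - p) * (b * b') - (p * a + (1 - p) * b) * (p * a' + (1 - p) * b') =
      p * (1 - p) * ((a - b) * (a' - b')) := by ring
  exact sub_nonneg.1 (hgap ▸ mul_nonneg (mul_nonneg hp hq) h)

theorem prod_sub_prod_mul_prod_sub_prod_nonneg {ι : Type*} {u v : ι → R} (hu : 0 ≤ u)
    (hv : 0 ≤ v) (huv : v ≤ u ∨ u ≤ v) (A B : Finset ι) :
    0 ≤ (∏ i ∈ A, u i - ∏ i ∈ A, v i) * (∏ i ∈ B, u i - ∏ i ∈ B, v i) := by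
  rcases huv with h | h
  · have hle (C : Finset ι) : ∏ i ∈ C, v i ≤ ∏ i ∈ C, u i :=
      prod_le_prod (fun i _ => hv i) fun i _ => h i
    exact mul_nonneg (sub_nonneg.2 (hle A)) (sub_nonneg.2 (hle B))
  · have hle (C : Finset ι) : ∏ i ∈ C, u i ≤ ∏ i ∈ C, v i :=
      prod_le_prod (fun i _ => hu i) fun i _ => h i
    exact mul_nonneg_of_nonpos_of_nonpos (sub_nonpos.2 (hle A)) (sub_nonpos.2 (hle B))

theorem prod_parts_convexComb_le_of_le {s : Finset α} {P Q : Finpartition s} (hPQ : P ≤ Q)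
    {p q : R} (hp : 0 ≤ p) (hq : 0 ≤ q) (hpq : p + q = 1) {u v : α → R} (hu : 0 ≤ u)
    (hv : 0 ≤ v) (huv : v ≤ u ∨ u ≤ v) :
    ∏ M ∈ P.parts, (p * ∏ a ∈ M, u a + q * ∏ a ∈ M, v a) ≤
      ∏ M ∈ Q.parts, (p * ∏ a ∈ M, u a + q * ∏ a ∈ M, v a) := by
  refine prod_parts_le_prod_parts_of_supermultiplicative
    (c := fun M => p * ∏ a ∈ M, u a + q * ∏ a ∈ M, v a) (fun A => ?_) ?_ (fun A B hAB => ?_) hPQ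
  · exact add_nonneg (mul_nonneg hp (prod_nonneg fun a _ => hu a))
      (mul_nonneg hq (prod_nonneg fun a _ => hv a))
  · simp [hpq]
  · simp only [prod_union hAB]
    exact convexComb_mul_convexComb_le hp hq hpq
      (prod_sub_prod_mul_prod_sub_prod_nonneg hu hv huv A B)

end Supermultiplicative

section PartitionMeasure

variable {n : ℕ} {P Q : Finpartition (univ : Finset (Fin n))} {p : ℝ}

theorem partMeasure_nonneg (hp0 : 0 ≤ p) (hp1 : p ≤ 1) (S : Finset (Fin n)) :
    0 ≤ partMeasure P p S := by
  refine prod_nonneg fun M _ => ?_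
  unfold blockWeight
  split_ifs <;> linarith

theorem biUnion_filter_subset_of_partMeasure_ne_zero {S : Finset (Fin n)}
    (hS : partMeasure P p S ≠ 0) : {M ∈ P.parts | M ⊆ S}.biUnion id = S := by
  refine biUnion_filter_subset_of_forall_subset_or_disjoint (subset_univ S) fun M hM => ?_
  have hweight : blockWeight p M S ≠ 0 := prod_ne_zero_iff.1 hS M hM
  rw [disjoint_iff_inter_eq_empty]
  unfold blockWeight at hweight
  grind

theorem blockWeight_biUnion_blocks {B : Finset (Finset (Fin n))} (hB : B ⊆ P.parts)
    {M : Finset (Fin n)} (hM : M ∈ P.parts) :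
    blockWeight p M (B.biUnion id) = if M ∈ B then p else 1 - p := by
  unfold blockWeight
  simp only [subset_biUnion_blocks_iff hB hM]
  split_ifs with hMB hdisj
  · rfl
  · rfl
  · exact absurd (disjoint_iff_inter_eq_empty.1 (disjoint_biUnion_blocks hB hM hMB)) hdisj

theorem partMeasure_biUnion_blocks {B : Finset (Finset (Fin n))} (hB : B ⊆ P.parts) :
    partMeasure P p (B.biUnion id) = (∏ _M ∈ B, p) * ∏ _M ∈ P.parts \ B, (1 - p) := by
  rw [partMeasure, prod_congr rfl fun M hM => blockWeight_biUnion_blocks hB hM, prod_ite,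
    filter_mem_eq_inter, inter_eq_right.2 hB, filter_notMem_eq_sdiff]

theorem sum_mul_partMeasure (f : Finset (Fin n) → ℝ) :
    ∑ S, f S * partMeasure P p S =
      ∑ B ∈ P.parts.powerset,
        f (B.biUnion id) * ((∏ _M ∈ B, p) * ∏ _M ∈ P.parts \ B, (1 - p)) := by
  symm
  refine sum_of_injOn (fun B => B.biUnion id) ?_ (fun _ _ => mem_coe.2 (mem_univ _)) ?_ ?_
  · exact Set.LeftInvOn.injOn (f₁' := fun S => {M ∈ P.parts | M ⊆ S}) fun B hB =>
      filter_subset_biUnion_blocks (mem_powerset.1 hB)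
  · intro S _ hS
    by_contra hne
    exact hS ⟨_, mem_coe.2 (mem_powerset.2 (filter_subset _ _)),
      biUnion_filter_subset_of_partMeasure_ne_zero (right_ne_zero_of_mul hne)⟩
  · intro B hB
    rw [partMeasure_biUnion_blocks (mem_powerset.1 hB)]

theorem sum_prod_ite_mul_partMeasure (u v : Fin n → ℝ) :
    ∑ S, (∏ l, if l ∈ S then u l else v l) * partMeasure P p S =
      ∏ M ∈ P.parts, (p * ∏ l ∈ M, u l + (1 - p) * ∏ l ∈ M, v l) := by
  rw [sum_mul_partMeasure, prod_add]
  refine sum_congr rfl fun B hB => ?_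
  rw [mem_powerset] at hB
  have hsplit : (∏ l, if l ∈ B.biUnion id then u l else v l) =
      (∏ M ∈ B, ∏ l ∈ M, u l) * ∏ M ∈ P.parts \ B, ∏ l ∈ M, v l := by
    rw [prod_ite, filter_mem_eq_inter, univ_inter, filter_notMem_eq_sdiff,
      ← biUnion_sdiff_blocks hB, prod_biUnion_blocks hB, prod_biUnion_blocks sdiff_subset]
  rw [hsplit, prod_mul_distrib, prod_mul_distrib]
  ring

theorem sum_prod_ite_mul_partMeasure_mono (hPQ : P ≤ Q) (hp0 : 0 ≤ p) (hp1 : p ≤ 1)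
    {u v : Fin n → ℝ} (hu : 0 ≤ u) (hv : 0 ≤ v) (huv : v ≤ u ∨ u ≤ v) :
    ∑ S, (∏ l, if l ∈ S then u l else v l) * partMeasure P p S ≤
      ∑ S, (∏ l, if l ∈ S then u l else v l) * partMeasure Q p S := by
  rw [sum_prod_ite_mul_partMeasure, sum_prod_ite_mul_partMeasure]
  exact prod_parts_convexComb_le_of_le hPQ hp0 (sub_nonneg.2 hp1) (add_sub_cancel _ _) hu hv huv

end PartitionMeasure

section Schedules

variable {m n : ℕ}

/-- A subset of `H × L`, viewed as the family of its sections over `H`: voter `h` turns out at the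
polls in the `h`-th section. -/
def sectionsEquiv (m n : ℕ) : Finset (Fin m × Fin n) ≃ (Fin m → Finset (Fin n)) where
  toFun T h := Lh h T
  invFun s := {x | x.2 ∈ s x.1}
  left_inv T := by ext; simp [Lh]
  right_inv s := by ext; simp [Lh]

theorem schedExp_eq_sum_sections (Sch : Fin m → Finpartition (univ : Finset (Fin n)))
    (p : Fin m → ℝ) (F : Fin n → Finset (Fin m) → ℝ) :
    schedExp Sch p F = ∑ s : Fin m → Finset (Fin n),
      (∏ l, F l {h | l ∈ s h}) * ∏ h, partMeasure (Sch h) (p h) (s h) := by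
  rw [← (sectionsEquiv m n).sum_comp]
  refine sum_congr rfl fun T _ => ?_
  simp [sectionsEquiv, schedMeasure, Hl, Lh]

theorem filter_mem_update {ι α : Type*} [Fintype ι] [DecidableEq ι] [DecidableEq α]
    (s : ι → Finset α) (i : ι) (S : Finset α) (a : α) :
    (univ.filter fun j => a ∈ Function.update s i S j) =
      if a ∈ S then insert i (univ.filter fun j => a ∈ s j ∧ j ≠ i)
      else univ.filter fun j => a ∈ s j ∧ j ≠ i := by
  ext j
  by_cases hj : j = i
  · subst hj
    split_ifs with ha <;> simp [ha]
  · split_ifs <;> simp [hj]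

theorem sum_update_mul_partMeasure_mono {P Q : Finpartition (univ : Finset (Fin n))} (hPQ : P ≤ Q)
    {p : ℝ} (hp0 : 0 ≤ p) (hp1 : p ≤ 1) {F : Fin n → Finset (Fin m) → ℝ}
    (hF : ∀ l S, 0 ≤ F l S) {h : Fin m}
    (halign : (∀ l, IncreasingAt (F l) h) ∨ ∀ l, DecreasingAt (F l) h)
    (s : Fin m → Finset (Fin n)) :
    ∑ S, (∏ l, F l {k | l ∈ Function.update s h S k}) * partMeasure P p S ≤
      ∑ S, (∏ l, F l {k | l ∈ Function.update s h S k}) * partMeasure Q p S := by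
  let others (l : Fin n) : Finset (Fin m) := {k | l ∈ s k ∧ k ≠ h}
  have hsplit (S : Finset (Fin n)) (l : Fin n) :
      F l {k | l ∈ Function.update s h S k} =
        if l ∈ S then F l (insert h (others l)) else F l (others l) := by
    rw [filter_mem_update, apply_ite (F l)]
  simp only [hsplit]
  exact sum_prod_ite_mul_partMeasure_mono hPQ hp0 hp1 (fun l => hF l _) (fun l => hF l _)
    (halign.imp (fun hinc l => hinc l _) fun hdec l => hdec l _)

theorem simultaneous_schedule_maximizes_general {p : Fin m → ℝ} (hp : ∀ h, 0 ≤ p h ∧ p h ≤ 1)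
    {F : Fin n → Finset (Fin m) → ℝ} (hFnonneg : ∀ l S, 0 ≤ F l S) (hFaligned : Aligned F)
    {Sch Sch' : Fin m → Finpartition (univ : Finset (Fin n))} (hcoarser : Coarser Sch' Sch) :
    schedExp Sch p F ≤ schedExp Sch' p F := by
  rw [schedExp_eq_sum_sections, schedExp_eq_sum_sections]
  refine sum_mul_prod_le_sum_mul_prod
    (fun h => partMeasure_nonneg (hp h).1 (hp h).2)
    (fun h => partMeasure_nonneg (hp h).1 (hp h).2) fun h s => ?_
  exact sum_update_mul_partMeasure_mono (hcoarser h) (hp h).1 (hp h).2 hFnonneg (hFaligned h) s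

end Schedules

/-- The fully simultaneous polling schedule (every voter's partition has the single
block `L`) maximizes the expectation of an aligned tuple of nonnegative functions over
all staggered schedules. -/
theorem simultaneous_schedule_maximizes {m n : ℕ}
    (p : Fin m → ℝ) (hp : ∀ h, 0 ≤ p h ∧ p h ≤ 1)
    (F : Fin n → Finset (Fin m) → ℝ)
    (hFnonneg : ∀ l S, 0 ≤ F l S) (hFaligned : Aligned F)
    (SchSimul : Fin m → Finpartition (univ : Finset (Fin n)))
    (hSimul : ∀ h, (SchSimul h).parts = {(univ : Finset (Fin n))}) :
    ∀ Sch : Fin m → Finpartition (univ : Finset (Fin n)),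
      schedExp Sch p F ≤ schedExp SchSimul p F :=
  fun _ => simultaneous_schedule_maximizes_general hp hFnonneg hFaligned fun h M _ =>
    ⟨univ, (hSimul h).symm ▸ mem_singleton_self _, subset_univ M⟩
end
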